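/- arXiv:0711.4841 — 2 statements merged into one kernel-verified Lean document; each statement's English description precedes it below -/
import Mathlib

section
/- The number of Dyck paths of semilength n with exactly k peaks equals the Narayana number N(n,k) = (1/n) * C(n,k) * C(n,k-1). -/
/-- A Dyck path of semilength `n`, encoded as a list of booleans (`true` = upstep,
`false` = downstep): `n` upsteps, `n` downsteps, and no prefix has more downsteps
than upsteps. -/
def IsDyckPath (n : ℕ) (p : List Bool) : Prop :=
  p.length = 2 * n ∧ p.count true = n ∧
    ∀ m : ℕ, (p.take m).count false ≤ (p.take m).count true

/-- The number of peaks of a path: positions where an upstep is immediately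
followed by a downstep. -/
def numPeaks (p : List Bool) : ℕ := (p.zip p.tail).count (true, false)

/-- The path `p`, started at height `h`, stays weakly above 0 and ends at 0. -/
def goodFrom : ℕ → List Bool → Prop
  | h, [] => h = 0
  | h, true :: p => goodFrom (h + 1) p
  | 0, false :: _ => False
  | h + 1, false :: p => goodFrom h p

theorem goodFrom_iff (p : List Bool) : ∀ h : ℕ, goodFrom h p ↔
    p.count false = h + p.count true ∧
      ∀ m : ℕ, (p.take m).count false ≤ h + (p.take m).count true := by
  induction p with
  | nil => intro h; simp [goodFrom, eq_comm]
  | cons x p ih =>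
    intro h
    cases x with
    | true =>
      rw [goodFrom, ih]
      constructor
      · rintro ⟨h1, h2⟩
        refine ⟨by simp; omega, fun m => ?_⟩
        cases m with
        | zero => simp
        | succ m => have := h2 m; simp; omega
      · rintro ⟨h1, h2⟩
        refine ⟨by simp at h1; omega, fun m => ?_⟩
        have := h2 (m + 1)
        simp at this; omega
    | false =>
      cases h with
      | zero =>
        rw [goodFrom]
        simp only [false_iff, not_and, not_forall]
        intro _
        exact ⟨1, by simp⟩
      | succ h =>
        rw [goodFrom, ih]
        constructor
        · rintro ⟨h1, h2⟩
          refine ⟨by simp; omega, fun m => ?_⟩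
          cases m with
          | zero => simp
          | succ m => have := h2 m; simp; omega
        · rintro ⟨h1, h2⟩
          refine ⟨by simp at h1; omega, fun m => ?_⟩
          have := h2 (m + 1)
          simp at this; omega

theorem isDyckPath_iff (n : ℕ) (p : List Bool) :
    IsDyckPath n p ↔ goodFrom 0 p ∧ p.count true = n := by
  have hl : p.count true + p.count false = p.length := by
    simpa using List.count_not_add_count p false
  rw [goodFrom_iff, IsDyckPath]
  simp only [zero_add]
  constructor
  · rintro ⟨h1, h2, h3⟩; exact ⟨⟨by omega, h3⟩, h2⟩
  · rintro ⟨⟨h1, h3⟩, h2⟩; exact ⟨by omega, h2, h3⟩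

theorem numPeaks_false (p : List Bool) : numPeaks (false :: p) = numPeaks p := by
  cases p <;> simp [numPeaks]

theorem numPeaks_tt (p : List Bool) : numPeaks (true :: true :: p) = numPeaks (true :: p) := by
  simp [numPeaks]

theorem numPeaks_tf (p : List Bool) : numPeaks (true :: false :: p) = numPeaks p + 1 := by
  rw [← numPeaks_false p]; simp [numPeaks]

/-- Continuations with `a` upsteps, from height `h`, previous step `x`, and `k` peaks. -/
def contSet (x : Bool) (a h k : ℕ) : Set (List Bool) :=
  {p | goodFrom h p ∧ p.count true = a ∧ numPeaks (x :: p) = k}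

def fF : ℕ → ℕ → ℕ → ℤ
  | 0, _, k => if k = 0 then 1 else 0
  | a + 1, h, k => (a + 1).choose k * (a + 1 + h).choose k - a.choose k * (a + h + 2).choose k

/-- Count for height `h + 1`. -/
def gG : ℕ → ℕ → ℕ → ℤ
  | _, _, 0 => 0
  | a, h, k + 1 => (a + 1).choose (k + 1) * (a + h).choose k
      - a.choose (k + 1) * (a + h + 1).choose k

def HasCard (s : Set (List Bool)) (c : ℤ) : Prop := s.Finite ∧ (s.ncard : ℤ) = c

theorem HasCard.cons {s : Set (List Bool)} {c : ℤ} (x : Bool) (h : HasCard s c) :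
    HasCard (List.cons x '' s) c :=
  ⟨h.1.image _, by rw [Set.ncard_image_of_injective _ List.cons_injective, h.2]⟩

theorem HasCard.union {s t : Set (List Bool)} {c d : ℤ} (hs : HasCard s c) (ht : HasCard t d) :
    HasCard (List.cons true '' s ∪ List.cons false '' t) (c + d) := by
  have h1 := hs.cons true
  have h2 := ht.cons false
  refine ⟨h1.1.union h2.1, ?_⟩
  rw [Set.ncard_union_eq _ h1.1 h2.1, Nat.cast_add, h1.2, h2.2]
  rw [Set.disjoint_left]
  rintro _ ⟨p, _, rfl⟩ ⟨q, _, hq⟩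
  simp at hq

theorem HasCard.empty : HasCard ∅ 0 := by simp [HasCard]

/-- Decomposition of a set of lists by first letter. -/
theorem HasCard.split {S s t : Set (List Bool)} {c d : ℤ} (hs : HasCard s c) (ht : HasCard t d)
    (h0 : [] ∉ S) (h1 : ∀ p, true :: p ∈ S ↔ p ∈ s) (h2 : ∀ p, false :: p ∈ S ↔ p ∈ t) :
    HasCard S (c + d) := by
  convert hs.union ht using 1
  ext p
  rcases p with _ | ⟨_ | _, p⟩ <;> simp [*]

theorem main_count : ∀ N a h : ℕ, 2 * a + h = N →
    (∀ k, HasCard (contSet false a h k) (fF a h k)) ∧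
    (∀ h', h = h' + 1 → ∀ k, HasCard (contSet true a h k) (gG a h' k)) := by
  intro N
  induction N using Nat.strong_induction_on with
  | _ N ih =>
  intro a h hN
  -- upstep part
  have hU : ∀ k, HasCard {p | true :: p ∈ contSet false a h k}
      (if a = 0 then 0 else gG (a - 1) (h + 1 - 1 + 0) k) := by
    intro k
    cases a with
    | zero =>
        convert HasCard.empty using 1
        swap
        · simp
        ext p; simp [contSet]
    | succ a =>
      have := (ih (2 * a + (h + 1)) (by omega) a (h + 1) rfl).2 h rfl k
      simpa [contSet, goodFrom, numPeaks_false] using this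
  have hD : ∀ k, HasCard {p | false :: p ∈ contSet false a h k}
      (if h = 0 then 0 else fF a (h - 1) k) := by
    intro k
    cases h with
    | zero =>
        convert HasCard.empty using 1
        swap
        · simp
        ext p; simp [contSet, goodFrom]
    | succ h =>
      have := (ih (2 * a + h) (by omega) a h rfl).1 k
      simpa [contSet, goodFrom, numPeaks_false] using this
  constructor
  · intro k
    by_cases h0 : a = 0 ∧ h = 0
    · obtain ⟨rfl, rfl⟩ := h0
      have : contSet false 0 0 k = if k = 0 then {[]} else ∅ := by
        ext p
        rcases p with _ | ⟨_ | _, p⟩ <;> split_ifs with hk <;>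
          simp [contSet, goodFrom, numPeaks, hk, eq_comm]
      rw [this]
      by_cases hk : k = 0 <;> simp [hk, HasCard, fF]
    · have := HasCard.split (S := contSet false a h k) (hU k) (hD k)
        (by simp [contSet, goodFrom]; intro h1 h2; omega) (fun _ => Iff.rfl) (fun _ => Iff.rfl)
      convert this using 1
      rcases a with _ | a <;> rcases h with _ | h
      · simp at h0
      · simp [fF]
      · rcases k with _ | k
        · simp [fF, gG]
        · simp [fF, gG, Nat.choose_succ_succ]; ring
      · rcases k with _ | k
        · simp [fF, gG]
        · have e1 : a + 1 + (h + 1) = (a + h + 1) + 1 := by ring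
          have e2 : a + (h + 1) + 2 = (a + h + 2) + 1 := by ring
          have e3 : a + 1 + h = a + h + 1 := by ring
          have e4 : a + (h + 1) = a + h + 1 := by ring
          simp only [fF, gG, e1, e3, e4, Nat.choose_succ_succ, Nat.add_sub_cancel, if_neg (Nat.succ_ne_zero _), add_zero, Nat.succ_eq_add_one]
          push_cast
          ring
  · rintro h rfl k
    have hU' : HasCard {p | true :: p ∈ contSet true a (h + 1) k}
        (if a = 0 then 0 else gG (a - 1) (h + 1) k) := by
      cases a with
      | zero =>
        convert HasCard.empty using 1
        swap
        · simp
        ext p; simp [contSet]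
      | succ a =>
        have := (ih (2 * a + (h + 1 + 1)) (by omega) a (h + 1 + 1) rfl).2 (h + 1) rfl k
        simpa [contSet, goodFrom, numPeaks_tt] using this
    have hD' : HasCard {p | false :: p ∈ contSet true a (h + 1) k}
        (if k = 0 then 0 else fF a h (k - 1)) := by
      cases k with
      | zero =>
        convert HasCard.empty using 1
        swap
        · simp
        ext p; simp [contSet, numPeaks_tf]
      | succ k =>
        have := (ih (2 * a + h) (by omega) a h rfl).1 k
        simpa [contSet, goodFrom, numPeaks_tf, numPeaks_false] using this
    have := HasCard.split (S := contSet true a (h + 1) k) hU' hD'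
      (by simp [contSet, goodFrom]) (fun _ => Iff.rfl) (fun _ => Iff.rfl)
    convert this using 1
    rcases k with _ | k
    · simp [gG]
    · rcases a with _ | a
      · rcases k with _ | k <;> simp [fF, gG, Nat.choose_succ_succ]
      · have e1 : a + 1 + h = a + h + 1 := by ring
        have e4 : a + (h + 1) = a + h + 1 := by ring
        have e5 : (a + 1 + 1).choose (k + 1) = (a + 1).choose k + (a + 1).choose (k + 1) :=
          Nat.choose_succ_succ _ _
        have e6 : (a + 1).choose (k + 1) = a.choose k + a.choose (k + 1) :=
          Nat.choose_succ_succ _ _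
        simp only [fF, gG, e1, e4, e5, Nat.add_sub_cancel, if_neg (Nat.succ_ne_zero _)]
        rw [e6]
        push_cast
        ring

/-- Dyck paths of semilength `n` with exactly `k` peaks are counted by the
Narayana number `N(n,k) = (1/n) C(n,k) C(n,k-1)`. -/
theorem card_dyck_paths_with_peaks (n k : ℕ) (hk : 1 ≤ k) (hkn : k ≤ n) :
    Nat.card {p : List Bool // IsDyckPath n p ∧ numPeaks p = k} =
      n.choose k * n.choose (k - 1) / n := by
  have hset : {p : List Bool | IsDyckPath n p ∧ numPeaks p = k} = contSet false n 0 k := by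
    ext p
    simp [contSet, isDyckPath_iff, numPeaks_false, and_assoc]
  have hc := ((main_count _ n 0 rfl).1 k).2
  rw [← hset] at hc
  change (Nat.card {p : List Bool // IsDyckPath n p ∧ numPeaks p = k} : ℤ) = _ at hc
  generalize Nat.card {p : List Bool // IsDyckPath n p ∧ numPeaks p = k} = c at hc
  obtain ⟨n, rfl⟩ : ∃ m, n = m + 1 := ⟨n - 1, by omega⟩
  obtain ⟨k, rfl⟩ : ∃ m, k = m + 1 := ⟨k - 1, by omega⟩
  symm
  apply Nat.div_eq_of_eq_mul_right (by omega)
  have h1 := Nat.choose_mul_succ_eq n (k + 1)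
  have h2 := Nat.choose_succ_right_eq (n + 1) k
  have h3 : (n + 2).choose (k + 1) = (n + 1).choose k + (n + 1).choose (k + 1) :=
    Nat.choose_succ_succ _ _
  simp only [fF, add_zero, h3] at hc
  simp only [Nat.add_sub_cancel]
  zify [show k + 1 ≤ n + 1 from hkn, show k ≤ n + 1 by omega] at h1 h2 ⊢
  push_cast at hc
  rw [hc]
  generalize ((n + 1).choose (k + 1) : ℤ) = A at *
  generalize ((n + 1).choose k : ℤ) = B at *
  generalize (n.choose (k + 1) : ℤ) = C at *
  linear_combination (B + A) * h1 - A * h2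
end

section
/- The number of pairs (π, f) where π is a noncrossing set partition of [k] and f assigns to each block of π a 321-avoiding permutation (linear ordering avoiding pattern 321) of that block equals (1/(2k+1)) * C(3k, k). -/
/-- A list avoids the pattern 321 if it has no decreasing subsequence of length 3. -/
def Avoids321 {α : Type*} [LinearOrder α] (l : List α) : Prop :=
  ¬ ∃ a b c : α, [a, b, c].Sublist l ∧ b < a ∧ c < b

open Finset

namespace NC321

/-! ### The numerical recursion -/

/-- Raney numbers. -/
def B : ℕ → ℕ → ℤ
  | 0, _ => 1
  | k + 1, n => ((3 * k + 3 + n).choose (k + 1) : ℤ) - 2 * ((3 * k + 3 + n).choose k : ℤ)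

lemma B_step (k n : ℕ) : B (k + 1) (n + 1) = B (k + 1) n + B k (n + 3) := by
  cases k with
  | zero => simp [B]; ring
  | succ k =>
    simp only [B]
    have e1 : 3 * (k + 1) + 3 + (n + 1) = (3 * k + 6 + n) + 1 := by ring
    have e2 : 3 * (k + 1) + 3 + n = 3 * k + 6 + n := by ring
    have e3 : 3 * k + 3 + (n + 3) = 3 * k + 6 + n := by ring
    rw [e1, e2, e3, Nat.choose_succ_succ, Nat.choose_succ_succ (3 * k + 6 + n) k]
    push_cast
    ring

lemma B_zero (k : ℕ) : B (k + 1) 0 = B k 2 := by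
  cases k with
  | zero => simp [B]
  | succ k =>
    simp only [B]
    have e1 : 3 * (k + 1) + 3 + 0 = (3 * k + 5) + 1 := by ring
    have e3 : 3 * k + 3 + 2 = 3 * k + 5 := by ring
    rw [e1, e3, Nat.choose_succ_succ, Nat.choose_succ_succ (3 * k + 5) k]
    have h := Nat.choose_succ_right_eq (3 * k + 5) (k + 1)
    have h2 : 3 * k + 5 - (k + 1) = 2 * (k + 1 + 1) := by omega
    rw [h2] at h
    have h3 : (3 * k + 5).choose (k + 1 + 1) = 2 * (3 * k + 5).choose (k + 1) := by
      apply Nat.eq_of_mul_eq_mul_right (show 0 < k + 1 + 1 by omega)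
      rw [h]; ring
    simp only [Nat.succ_eq_add_one] at *
    rw [h3]
    push_cast
    ring

/-- The transfer operator of the generating tree. -/
def L (g : ℕ → ℤ) (n : ℕ) : ℤ := ∑ t ∈ Icc 2 (n + 2), g t

lemma L_B (k : ℕ) : L (B k) = B (k + 1) := by
  funext n
  induction n with
  | zero => simp [L, B_zero]
  | succ n ih =>
    rw [B_step, ← ih]
    unfold L
    rw [show n + 1 + 2 = (n + 2) + 1 by ring, Finset.sum_Icc_succ_top (by omega)]

lemma B_final (k : ℕ) : B k 0 = (((3 * k).choose k / (2 * k + 1) : ℕ) : ℤ) := by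
  cases k with
  | zero => simp [B]
  | succ k =>
    have h := Nat.choose_succ_right_eq (3 * k + 3) k
    have h2 : 3 * k + 3 - k = 2 * k + 3 := by omega
    rw [h2] at h
    have hB : B (k + 1) 0 * (2 * k + 3) = ((3 * k + 3).choose (k + 1) : ℤ) := by
      simp only [B, add_zero]
      have h' : ((3 * k + 3).choose (k + 1) : ℤ) * (k + 1) = (3 * k + 3).choose k * (2 * k + 3) := by
        exact_mod_cast h
      linear_combination (-2) * (-1) * h'
    have : 0 ≤ B (k + 1) 0 := by
      by_contra hc
      push Not at hc
      have : B (k + 1) 0 * (2 * k + 3) < 0 := mul_neg_of_neg_of_pos hc (by positivity)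
      rw [hB] at this
      have : (0 : ℤ) ≤ ((3 * k + 3).choose (k + 1) : ℤ) := by positivity
      omega
    obtain ⟨b, hb⟩ := Int.eq_ofNat_of_zero_le this
    rw [hb] at hB ⊢
    have hB' : b * (2 * k + 3) = (3 * k + 3).choose (k + 1) := by exact_mod_cast hB
    rw [show 3 * (k + 1) = 3 * k + 3 by ring, ← hB', show 2 * (k + 1) + 1 = 2 * k + 3 by ring,
      Nat.mul_div_cancel _ (by omega)]

/-! ### Lists and insertion sites -/

/-- Positions where a new maximum may be inserted. -/
def sites (l : List ℕ) : Finset ℕ :=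
  (range (l.length + 1)).filter (fun i => (l.drop i).Pairwise (· < ·))

/-- The number of sites. -/
def wt (l : List ℕ) : ℕ := (sites l).card

/-- Insert `k` at position `i`. -/
def ins (k : ℕ) (l : List ℕ) (i : ℕ) : List ℕ := l.take i ++ k :: l.drop i

lemma mem_ins {k : ℕ} {l : List ℕ} {i x : ℕ} : x ∈ ins k l i ↔ x = k ∨ x ∈ l := by
  unfold ins
  conv_rhs => rw [← List.take_append_drop i l]
  simp only [List.mem_append, List.mem_cons]
  tauto

lemma length_ins {k : ℕ} {l : List ℕ} {i : ℕ} : (ins k l i).length = l.length + 1 := by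
  unfold ins
  simp
  omega

lemma erase_ins {k : ℕ} {l : List ℕ} {i : ℕ} (h : k ∉ l) : (ins k l i).erase k = l := by
  unfold ins
  have : k ∉ l.take i := fun h' => h (List.mem_of_mem_take h')
  rw [List.erase_append_right _ this]
  simp

lemma mem_sites {l : List ℕ} {i : ℕ} :
    i ∈ sites l ↔ i ≤ l.length ∧ (l.drop i).Pairwise (· < ·) := by
  simp [sites]

lemma ins_inj {k : ℕ} {l : List ℕ} {i j : ℕ} (h : k ∉ l) (hi : i ≤ l.length) (hj : j ≤ l.length)
    (he : ins k l i = ins k l j) : i = j := by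
  have key : ∀ i ≤ l.length, (ins k l i).idxOf k = i := by
    intro i hi
    unfold ins
    have : k ∉ l.take i := fun h' => h (List.mem_of_mem_take h')
    rw [List.idxOf_append_of_notMem this]
    simp [hi]
  rw [← key i hi, ← key j hj, he]

lemma sites_eq (l : List ℕ) : ∃ m ≤ l.length, sites l = Icc m l.length := by
  classical
  have hex : ∃ m, (l.drop m).Pairwise (· < ·) := ⟨l.length, by simp⟩
  refine ⟨Nat.find hex, Nat.find_min' hex (by simp), ?_⟩
  ext i
  rw [mem_sites, mem_Icc]
  constructor
  · rintro ⟨h1, h2⟩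
    exact ⟨Nat.find_min' hex h2, h1⟩
  · rintro ⟨h1, h2⟩
    refine ⟨h2, ?_⟩
    have := Nat.find_spec hex
    refine this.sublist ?_
    exact List.drop_sublist_drop_left l h1

lemma wt_ins_lt {k : ℕ} {l : List ℕ} {i : ℕ} (hk : ∀ x ∈ l, x < k) (hi : i ∈ sites l)
    (hl : i < l.length) : wt (ins k l i) = l.length + 1 - i := by
  have : sites (ins k l i) = Icc (i + 1) (l.length + 1) := by
    ext q
    rw [mem_sites, mem_Icc, length_ins]
    rw [mem_sites] at hi
    have hlen : (l.take i).length = i := by simp; omega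
    constructor
    · rintro ⟨h1, h2⟩
      refine ⟨?_, h1⟩
      by_contra hc
      have hq : q ≤ i := by omega
      have hs : (k :: l.drop i).Pairwise (· < ·) := by
        refine h2.sublist ?_
        unfold ins
        rw [List.drop_append_of_le_length (by omega)]
        exact List.sublist_append_right _ _
      rw [List.pairwise_cons] at hs
      have hm : l[i] ∈ l.drop i := by
        rw [List.drop_eq_getElem_cons hl]; exact List.mem_cons_self
      have h3 := hs.1 _ hm
      have h4 := hk _ (List.getElem_mem hl)
      omega
    · rintro ⟨h1, h2⟩
      refine ⟨h2, ?_⟩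
      unfold ins
      obtain ⟨r, rfl⟩ := Nat.exists_eq_add_of_le h1
      rw [List.drop_append, List.drop_eq_nil_of_le (by omega), hlen,
        show i + 1 + r - i = r + 1 by omega, List.drop_succ_cons, List.nil_append]
      exact hi.2.sublist (List.drop_sublist _ _)
  rw [wt, this, Nat.card_Icc]
  omega

lemma wt_ins_eq {k : ℕ} {l : List ℕ} (hk : ∀ x ∈ l, x < k) :
    wt (ins k l l.length) = wt l + 1 := by
  have : sites (ins k l l.length) = insert (l.length + 1) (sites l) := by
    ext q
    rw [mem_insert, mem_sites, mem_sites, length_ins]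
    have e : ins k l l.length = l ++ [k] := by simp [ins]
    rw [e]
    rcases Nat.lt_or_ge l.length q with h | h
    · constructor
      · rintro ⟨h1, h2⟩
        left; omega
      · rintro (h1 | h1)
        · subst h1
          refine ⟨le_rfl, ?_⟩
          rw [List.drop_eq_nil_of_le (by simp)]
          exact List.Pairwise.nil
        · omega
    · rw [List.drop_append_of_le_length h, List.pairwise_append]
      have : ∀ a ∈ l.drop q, ∀ b ∈ [k], a < b := by
        intro a ha b hb
        simp only [List.mem_singleton] at hb
        subst hb
        exact hk _ (List.mem_of_mem_drop ha)
      constructor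
      · rintro ⟨h1, h2, -⟩
        exact Or.inr ⟨h, h2⟩
      · rintro (h1 | ⟨-, h2⟩)
        · omega
        · exact ⟨by omega, h2, by simp, this⟩
  rw [wt, this, card_insert_of_notMem, wt]
  rw [mem_sites]
  omega

lemma sum_sites (k : ℕ) (l : List ℕ) (hk : ∀ x ∈ l, x < k) (g : ℕ → ℤ) :
    ∑ i ∈ sites l, g (wt (ins k l i)) = ∑ t ∈ Icc 2 (wt l + 1), g t := by
  obtain ⟨m, hm, hs⟩ := sites_eq l
  have hw : wt l = l.length + 1 - m := by rw [wt, hs, Nat.card_Icc]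
  have h1 : ∑ i ∈ sites l, g (wt (ins k l i)) =
      (∑ i ∈ Ico m l.length, g (l.length + 1 - i)) + g (wt l + 1) := by
    have e : sites l = insert l.length (Ico m l.length) := by
      ext x; rw [hs, mem_insert, mem_Ico, mem_Icc]; omega
    have hmem : ∀ i ∈ Ico m l.length, i ∈ sites l := by
      intro i hi; rw [e]; exact mem_insert_of_mem hi
    rw [e, sum_insert (by simp), wt_ins_eq hk, add_comm]
    congr 1
    refine sum_congr rfl fun i hi => ?_
    rw [wt_ins_lt hk (hmem i hi) (mem_Ico.1 hi).2]
  rw [h1, Finset.sum_Icc_succ_top (by omega)]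
  congr 1
  rw [hw]
  refine sum_bij' (fun i _ => l.length + 1 - i) (fun t _ => l.length + 1 - t) ?_ ?_ ?_ ?_
    (fun _ _ => rfl) <;> simp only [mem_Ico, mem_Icc] <;> intros <;> omega

lemma avoids_ins {k : ℕ} {l : List ℕ} {i : ℕ} (hk : ∀ x ∈ l, x < k) (hi : i ∈ sites l)
    (ha : Avoids321 l) : Avoids321 (ins k l i) := by
  have hkl : k ∉ l := fun h => lt_irrefl _ (hk k h)
  rintro ⟨a, b, c, hs, hba, hcb⟩
  have hle : ∀ x ∈ [a, b, c], x = k ∨ x < k := by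
    intro x hx
    rcases mem_ins.1 (hs.subset hx) with h | h
    · exact Or.inl h
    · exact Or.inr (hk _ h)
  have hA := hle a (by simp)
  rcases hA with rfl | hA
  · unfold ins at hs
    rw [List.sublist_append_iff] at hs
    obtain ⟨u, v, huv, hu, hv⟩ := hs
    cases u with
    | nil =>
      simp only [List.nil_append] at huv
      subst huv
      rw [List.cons_sublist_cons] at hv
      have := List.pairwise_iff_forall_sublist.1 (mem_sites.1 hi).2 hv
      omega
    | cons x u =>
      simp only [List.cons_append, List.cons.injEq] at huv
      obtain ⟨rfl, -⟩ := huv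
      exact hkl (List.mem_of_mem_take (hu.subset (by simp)))
  · have := hs.erase k
    rw [erase_ins hkl, List.erase_of_not_mem] at this
    · exact ha ⟨a, b, c, this, hba, hcb⟩
    · simp only [List.mem_cons, List.not_mem_nil, or_false]
      omega

lemma pairwise_of_avoids {k : ℕ} {p s : List ℕ} (hk : ∀ x ∈ s, x < k) (hn : s.Nodup)
    (ha : Avoids321 (p ++ k :: s)) : s.Pairwise (· < ·) := by
  rw [List.pairwise_iff_forall_sublist]
  intro b c hbc
  by_contra hlt
  have hne : b ≠ c := by
    have := hn.sublist hbc
    simpa using this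
  refine ha ⟨k, b, c, ?_, hk b (hbc.subset (by simp)), by omega⟩
  exact (List.cons_sublist_cons.2 hbc).trans (List.sublist_append_right _ _)

/-! ### Structures -/

/-- Good structures on `{0, …, k-1}`. -/
structure Good (k : ℕ) (S : Finset (List ℕ)) : Prop where
  ne : ∀ l ∈ S, l ≠ []
  nd : ∀ l ∈ S, l.Nodup
  av : ∀ l ∈ S, Avoids321 l
  lt : ∀ l ∈ S, ∀ x ∈ l, x < k
  cov : ∀ x < k, ∃ l ∈ S, x ∈ l
  dis : ∀ l ∈ S, ∀ l' ∈ S, ∀ x, x ∈ l → x ∈ l' → l = l'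
  nc : ∀ a b c d, a < b → b < c → c < d → ∀ l₁ ∈ S, ∀ l₂ ∈ S, a ∈ l₁ → c ∈ l₁ → b ∈ l₂ → d ∈ l₂ →
    l₁ = l₂

/-- `l` is not nested under another block. -/
def IsOut (S : Finset (List ℕ)) (l : List ℕ) : Prop :=
  ∀ l' ∈ S, l' ≠ l → ∀ a ∈ l', ∀ c ∈ l', ∀ b ∈ l, a < b → b < c → False

open Classical in
/-- The outer blocks. -/
noncomputable def outer (S : Finset (List ℕ)) : Finset (List ℕ) := S.filter (IsOut S)

lemma mem_outer {S : Finset (List ℕ)} {l : List ℕ} : l ∈ outer S ↔ l ∈ S ∧ IsOut S l := by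
  classical
  simp [outer]

/-- The statistic of the generating tree. -/
noncomputable def N (S : Finset (List ℕ)) : ℕ := ∑ l ∈ outer S, wt l

/-- Key used to order outer blocks. -/
def key (l : List ℕ) : ℕ := l.headD 0

lemma key_mem {l : List ℕ} (h : l ≠ []) : key l ∈ l := by
  cases l with
  | nil => exact absurd rfl h
  | cons a l => simp [key]

/-- Insertion of `k` in block `l`. -/
def child (k : ℕ) (S : Finset (List ℕ)) (l : List ℕ) (i : ℕ) : Finset (List ℕ) :=
  insert (ins k l i) (S.erase l)

/-- Deleting `k`. -/
def par (k : ℕ) (S : Finset (List ℕ)) : Finset (List ℕ) := (S.image (fun l => l.erase k)).erase []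

lemma outer_lt {k : ℕ} {S : Finset (List ℕ)} (hS : Good k S) {l l' : List ℕ} (hl : l ∈ outer S)
    (hl' : l' ∈ outer S) (h : key l < key l') : ∀ x ∈ l, ∀ y ∈ l', x < y := by
  intro x hx y hy
  rw [mem_outer] at hl hl'
  have hne : l ≠ l' := by rintro rfl; omega
  have k1 := key_mem (hS.ne l hl.1)
  have k2 := key_mem (hS.ne l' hl'.1)
  have d : ∀ x ∈ l, ∀ y ∈ l', x ≠ y := by
    rintro x hx y hy rfl
    exact hne (hS.dis l hl.1 l' hl'.1 x hx hy)
  have o1 := hl.2 l' hl'.1 hne.symm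
  have o2 := hl'.2 l hl.1 hne
  by_contra hc
  have h1 := d x hx y hy
  have h2 := d _ k1 y hy
  rcases lt_or_gt_of_ne h2 with h3 | h3
  · exact o2 _ k1 x hx y hy h3 (by omega)
  · exact o1 y hy _ k2 _ k1 h3 h

lemma key_inj {k : ℕ} {S : Finset (List ℕ)} (hS : Good k S) {l l' : List ℕ} (hl : l ∈ outer S)
    (hl' : l' ∈ outer S) (h : key l = key l') : l = l' := by
  rw [mem_outer] at hl hl'
  exact hS.dis l hl.1 l' hl'.1 _ (key_mem (hS.ne l hl.1)) (h ▸ key_mem (hS.ne l' hl'.1))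

lemma Good.not_mem {k : ℕ} {S : Finset (List ℕ)} (hS : Good k S) {l : List ℕ} (hl : l ∈ S) :
    k ∉ l := fun h => lt_irrefl _ (hS.lt l hl k h)

lemma good_push {k : ℕ} {S : Finset (List ℕ)} (hS : Good k S) : Good (k + 1) (insert [k] S) := by
  have hnm := fun l (hl : l ∈ S) => hS.not_mem hl
  have hlt := hS.lt
  constructor
  · intro l hl
    rcases mem_insert.1 hl with rfl | hl
    · simp
    · exact hS.ne l hl
  · intro l hl
    rcases mem_insert.1 hl with rfl | hl
    · simp
    · exact hS.nd l hl
  · intro l hl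
    rcases mem_insert.1 hl with rfl | hl
    · rintro ⟨a, b, c, h, -⟩
      simpa using h.length_le
    · exact hS.av l hl
  · intro l hl x hx
    rcases mem_insert.1 hl with rfl | hl
    · simp at hx; omega
    · have := hS.lt l hl x hx; omega
  · intro x hx
    rcases Nat.lt_succ_iff_lt_or_eq.1 hx with h | rfl
    · obtain ⟨l, hl, hxl⟩ := hS.cov x h
      exact ⟨l, mem_insert_of_mem hl, hxl⟩
    · exact ⟨[x], mem_insert_self _ _, by simp⟩
  · intro l hl l' hl' x hx hx'
    rcases mem_insert.1 hl with rfl | h <;> rcases mem_insert.1 hl' with rfl | h'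
    · rfl
    · simp only [List.mem_singleton] at hx
      rw [hx] at hx'
      exact absurd hx' (hnm _ h')
    · simp only [List.mem_singleton] at hx'
      rw [hx'] at hx
      exact absurd hx (hnm _ h)
    · exact hS.dis l h l' h' x hx hx'
  · intro a b c d hab hbc hcd l₁ h₁ l₂ h₂ ha hc hb hd
    rcases mem_insert.1 h₁ with rfl | h₁ <;> rcases mem_insert.1 h₂ with rfl | h₂
    · rfl
    · simp at ha hc; omega
    · simp at hb hd; omega
    · exact hS.nc a b c d hab hbc hcd l₁ h₁ l₂ h₂ ha hc hb hd

lemma good_child {k : ℕ} {S : Finset (List ℕ)} (hS : Good k S) {l : List ℕ} (hl : l ∈ outer S)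
    {i : ℕ} (hi : i ∈ sites l) : Good (k + 1) (child k S l i) := by
  rw [mem_outer] at hl
  obtain ⟨hl, ho⟩ := hl
  have hnm := fun l (hl : l ∈ S) => hS.not_mem hl
  have hlt := hS.lt
  have hm : ∀ {l'}, l' ∈ child k S l i → l' = ins k l i ∨ (l' ≠ l ∧ l' ∈ S) := by
    intro l' h; simpa [child] using h
  constructor
  · intro l' h
    rcases hm h with rfl | ⟨hn, h⟩
    · intro h'
      have := @length_ins k l i
      rw [h'] at this; simp at this
    · exact hS.ne _ h
  · intro l' h
    rcases hm h with rfl | ⟨hn, h⟩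
    · unfold ins
      rw [List.nodup_middle, List.take_append_drop, List.nodup_cons]
      exact ⟨hnm l hl, hS.nd l hl⟩
    · exact hS.nd _ h
  · intro l' h
    rcases hm h with rfl | ⟨hn, h⟩
    · exact avoids_ins (hS.lt l hl) hi (hS.av l hl)
    · exact hS.av _ h
  · intro l' h x hx
    rcases hm h with rfl | ⟨hn, h⟩
    · rcases mem_ins.1 hx with rfl | hx
      · omega
      · have := hlt l hl x hx; omega
    · have := hlt _ h x hx; omega
  · intro x hx
    rcases Nat.lt_succ_iff_lt_or_eq.1 hx with h | rfl
    · obtain ⟨l', hl', hxl⟩ := hS.cov x h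
      by_cases he : l' = l
      · subst he
        exact ⟨ins k l' i, mem_insert_self _ _, mem_ins.2 (Or.inr hxl)⟩
      · exact ⟨l', mem_insert_of_mem (mem_erase.2 ⟨he, hl'⟩), hxl⟩
    · exact ⟨ins x l i, mem_insert_self _ _, mem_ins.2 (Or.inl rfl)⟩
  · have main : ∀ l' ∈ S, l' ≠ l → ∀ x, x ∈ ins k l i → x ∈ l' → False := by
      intro l' h hn x hx hx'
      rcases mem_ins.1 hx with rfl | hx
      · exact hnm _ h hx'
      · exact hn (hS.dis _ h _ hl x hx' hx)
    intro l₁ h₁ l₂ h₂ x hx hx'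
    rcases hm h₁ with rfl | ⟨hn₁, h₁⟩ <;> rcases hm h₂ with rfl | ⟨hn₂, h₂⟩
    · rfl
    · exact (main _ h₂ hn₂ x hx hx').elim
    · exact (main _ h₁ hn₁ x hx' hx).elim
    · exact hS.dis _ h₁ _ h₂ x hx hx'
  · intro a b c d hab hbc hcd l₁ h₁ l₂ h₂ ha hc hb hd
    rcases hm h₁ with rfl | ⟨hn₁, h₁⟩ <;> rcases hm h₂ with rfl | ⟨hn₂, h₂⟩
    · rfl
    · exfalso
      have hdk := hlt _ h₂ d hd
      rcases mem_ins.1 ha with rfl | ha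
      · omega
      rcases mem_ins.1 hc with rfl | hc
      · omega
      exact hn₂ (hS.nc a b c d hab hbc hcd l hl l₂ h₂ ha hc hb hd).symm
    · exfalso
      have hck := hlt _ h₁ c hc
      rcases mem_ins.1 hb with rfl | hb
      · omega
      exact ho l₁ h₁ hn₁ a ha c hc b hb hab hbc
    · exact hS.nc a b c d hab hbc hcd l₁ h₁ l₂ h₂ ha hc hb hd

lemma par_push {k : ℕ} {S : Finset (List ℕ)} (hS : Good k S) : par k (insert [k] S) = S := by
  unfold par
  have : S.image (fun l => l.erase k) = S := by
    conv_rhs => rw [← image_id (s := S)]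
    exact image_congr fun l hl => List.erase_of_not_mem (hS.not_mem hl)
  rw [image_insert, this]
  have h0 : [] ∉ S := fun h => hS.ne _ h rfl
  simp [h0]

lemma par_child {k : ℕ} {S : Finset (List ℕ)} (hS : Good k S) {l : List ℕ} (hl : l ∈ S)
    {i : ℕ} : par k (child k S l i) = S := by
  unfold par child
  have : (S.erase l).image (fun l => l.erase k) = S.erase l := by
    conv_rhs => rw [← image_id (s := S.erase l)]
    exact image_congr fun l hl => List.erase_of_not_mem (hS.not_mem (mem_of_mem_erase hl))
  rw [image_insert, this, erase_ins (hS.not_mem hl), insert_erase hl]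
  have h0 : [] ∉ S := fun h => hS.ne _ h rfl
  exact erase_eq_of_notMem h0

lemma mem_par {k : ℕ} {S : Finset (List ℕ)} {l : List ℕ} :
    l ∈ par k S ↔ l ≠ [] ∧ ∃ l' ∈ S, l'.erase k = l := by
  simp [par]

lemma good_par {k : ℕ} {S : Finset (List ℕ)} (hS : Good (k + 1) S) : Good k (par k S) := by
  have hme : ∀ l ∈ S, ∀ x, x ∈ l.erase k ↔ x ≠ k ∧ x ∈ l := fun l hl x => (hS.nd l hl).mem_erase_iff
  constructor
  · intro l hl
    exact (mem_par.1 hl).1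
  · intro l hl
    obtain ⟨-, l', h, rfl⟩ := mem_par.1 hl
    exact (hS.nd _ h).erase _
  · intro l hl
    obtain ⟨-, l', h, rfl⟩ := mem_par.1 hl
    rintro ⟨a, b, c, hs, h1, h2⟩
    exact hS.av _ h ⟨a, b, c, hs.trans List.erase_sublist, h1, h2⟩
  · intro l hl x hx
    obtain ⟨-, l', h, rfl⟩ := mem_par.1 hl
    rw [hme _ h] at hx
    have := hS.lt _ h x hx.2
    omega
  · intro x hx
    obtain ⟨l, hl, hxl⟩ := hS.cov x (by omega)
    have : x ∈ l.erase k := (hme l hl x).2 ⟨by omega, hxl⟩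
    exact ⟨l.erase k, mem_par.2 ⟨List.ne_nil_of_mem this, l, hl, rfl⟩, this⟩
  · intro l hl l' hl' x hx hx'
    obtain ⟨-, l₁, h₁, rfl⟩ := mem_par.1 hl
    obtain ⟨-, l₂, h₂, rfl⟩ := mem_par.1 hl'
    rw [hme _ h₁] at hx
    rw [hme _ h₂] at hx'
    rw [hS.dis _ h₁ _ h₂ x hx.2 hx'.2]
  · intro a b c d hab hbc hcd l hl l' hl' ha hc hb hd
    obtain ⟨-, l₁, h₁, rfl⟩ := mem_par.1 hl
    obtain ⟨-, l₂, h₂, rfl⟩ := mem_par.1 hl'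
    rw [hme _ h₁] at ha hc
    rw [hme _ h₂] at hb hd
    rw [hS.nc a b c d hab hbc hcd _ h₁ _ h₂ ha.2 hc.2 hb.2 hd.2]

lemma exists_par {k : ℕ} {S : Finset (List ℕ)} (hS : Good (k + 1) S) :
    S = insert [k] (par k S) ∨
      ∃ l ∈ outer (par k S), ∃ i ∈ sites l, S = child k (par k S) l i := by
  have hme : ∀ l ∈ S, ∀ x, x ∈ l.erase k ↔ x ≠ k ∧ x ∈ l := fun l hl x => (hS.nd l hl).mem_erase_iff
  obtain ⟨c, hc, hkc⟩ := hS.cov k (by omega)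
  have hoth : ∀ l ∈ S, l ≠ c → l.erase k = l := by
    intro l hl hne
    apply List.erase_of_not_mem
    intro h
    exact hne (hS.dis l hl c hc k h hkc)
  obtain ⟨p, s, hps⟩ := List.append_of_mem hkc
  have hnd := hS.nd c hc
  have hkps : k ∉ p ++ s := by
    rw [hps, List.nodup_middle, List.nodup_cons] at hnd
    exact hnd.1
  have her : c.erase k = p ++ s := by
    rw [hps, List.erase_append_right _ (fun h => hkps (List.mem_append_left _ h))]
    simp
  by_cases h0 : p ++ s = []
  · left
    have hck : c = [k] := by
      rw [List.append_eq_nil_iff] at h0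
      rw [hps, h0.1, h0.2]; rfl
    ext l
    rw [mem_insert, mem_par]
    constructor
    · intro hl
      by_cases h : l = c
      · left; rw [h, hck]
      · right
        exact ⟨hS.ne l hl, l, hl, hoth l hl h⟩
    · rintro (rfl | ⟨hne, l', hl', rfl⟩)
      · rw [← hck]; exact hc
      · by_cases h : l' = c
        · rw [h, her] at hne; exact absurd h0 hne
        · rw [hoth l' hl' h]; exact hl'
  · right
    have hmem : p ++ s ∈ par k S := mem_par.2 ⟨h0, c, hc, her⟩
    have hnS : p ++ s ∉ S := by
      intro h
      obtain ⟨x, hx⟩ := List.exists_mem_of_ne_nil _ h0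
      have hxc : x ∈ c := ((hme c hc x).1 (her ▸ hx)).2
      have := hS.dis _ h _ hc x hx hxc
      rw [this] at hkps
      exact hkps hkc
    refine ⟨p ++ s, ?_, p.length, ?_, ?_⟩
    · rw [mem_outer]
      refine ⟨hmem, ?_⟩
      intro l' hl' hne a ha d hd b hb hab hbd
      obtain ⟨-, l₁, h₁, rfl⟩ := mem_par.1 hl'
      have hn : l₁ ≠ c := by rintro rfl; exact hne her
      rw [hme _ h₁] at ha hd
      rw [← her, hme _ hc] at hb
      have hlt := hS.lt _ h₁ d hd.2
      exact hn (hS.nc a b d k hab hbd (by omega) l₁ h₁ c hc ha.2 hd.2 hb.2 hkc)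
    · rw [mem_sites]
      refine ⟨by simp, ?_⟩
      rw [List.drop_left]
      have hav := hS.av c hc
      rw [hps] at hav
      refine pairwise_of_avoids ?_ ?_ hav
      · intro x hx
        have h1 := (hme c hc x).1 (her ▸ List.mem_append_right _ hx)
        have h2 := hS.lt c hc x h1.2
        omega
      · rw [hps] at hnd
        exact hnd.sublist ((List.sublist_cons_self _ _).trans (List.sublist_append_right _ _))
    · have hins : ins k (p ++ s) p.length = c := by
        simp [ins, hps]
      unfold child
      rw [hins]
      ext l
      rw [mem_insert, mem_erase, mem_par]
      constructor
      · intro hl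
        by_cases h : l = c
        · left; exact h
        · right
          refine ⟨?_, hS.ne l hl, l, hl, hoth l hl h⟩
          rintro rfl; exact hnS hl
      · rintro (rfl | ⟨hne, -, l', hl', rfl⟩)
        · exact hc
        · by_cases h : l' = c
          · rw [h, her] at hne; exact absurd rfl hne
          · rw [hoth l' hl' h]; exact hl'

/-! ### The statistic of children -/

lemma outer_push {k : ℕ} {S : Finset (List ℕ)} (hS : Good k S) :
    outer (insert [k] S) = insert [k] (outer S) := by
  ext l
  rw [mem_insert, mem_outer, mem_outer, mem_insert]
  have hlt := hS.lt
  constructor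
  · rintro ⟨rfl | hl, ho⟩
    · exact Or.inl rfl
    · exact Or.inr ⟨hl, fun l' hl' => ho l' (mem_insert_of_mem hl')⟩
  · rintro (rfl | ⟨hl, ho⟩)
    · refine ⟨Or.inl rfl, ?_⟩
      intro l' hl' hne a ha c hc b hb hab hbc
      rcases mem_insert.1 hl' with rfl | hl'
      · exact hne rfl
      · have := hlt _ hl' c hc
        simp at hb; omega
    · refine ⟨Or.inr hl, ?_⟩
      intro l' hl' hne a ha c hc b hb hab hbc
      rcases mem_insert.1 hl' with rfl | hl'
      · simp at ha hc; omega
      · exact ho l' hl' hne a ha c hc b hb hab hbc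

lemma N_push {k : ℕ} {S : Finset (List ℕ)} (hS : Good k S) : N (insert [k] S) = N S + 2 := by
  unfold N
  rw [outer_push hS, sum_insert, add_comm]
  · congr 1
  · intro h
    exact hS.not_mem (mem_outer.1 h).1 (by simp)

lemma outer_child {k : ℕ} {S : Finset (List ℕ)} (hS : Good k S) {l : List ℕ} (hl : l ∈ outer S)
    {i : ℕ} : outer (child k S l i) =
      insert (ins k l i) ((outer S).filter (fun l' => key l' < key l)) := by
  have hl0 := hl
  rw [mem_outer] at hl
  obtain ⟨hlS, ho⟩ := hl
  have hlt := hS.lt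
  have hnot : ins k l i ∉ S := fun h => hS.not_mem h (mem_ins.2 (Or.inl rfl))
  ext m
  rw [mem_insert, mem_filter, mem_outer, child, mem_insert, mem_erase]
  constructor
  · rintro ⟨h | ⟨hne, hm⟩, hom⟩
    · exact Or.inl h
    · right
      have hmc : ins k l i ≠ m := by rintro rfl; exact hnot hm
      have hmo : m ∈ outer S := by
        rw [mem_outer]
        refine ⟨hm, ?_⟩
        intro l' hl' hne' a ha c hc b hb hab hbc
        by_cases h : l' = l
        · subst h
          exact hom (ins k l' i) (mem_insert_self _ _) hmc a (mem_ins.2 (Or.inr ha)) c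
            (mem_ins.2 (Or.inr hc)) b hb hab hbc
        · exact hom l' (mem_insert_of_mem (mem_erase.2 ⟨h, hl'⟩)) hne' a ha c hc b hb hab hbc
      refine ⟨hmo, ?_⟩
      by_contra hge
      have hk : key l < key m := by
        rcases lt_or_eq_of_le (not_lt.1 hge) with h | h
        · exact h
        · exact absurd (key_inj hS hl0 hmo h).symm hne
      have k1 := key_mem (hS.ne l hlS)
      have k2 := key_mem (hS.ne m hm)
      exact hom _ (mem_insert_self _ _) hmc _ (mem_ins.2 (Or.inr k1)) k (mem_ins.2 (Or.inl rfl)) _ k2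
        hk (hlt m hm _ k2)
  · rintro (rfl | ⟨hmo, hkey⟩)
    · refine ⟨Or.inl rfl, ?_⟩
      intro l' hl' hne a ha c hc b hb hab hbc
      rcases mem_insert.1 hl' with rfl | hl'
      · exact hne rfl
      · rw [mem_erase] at hl'
        have := hlt _ hl'.2 c hc
        rcases mem_ins.1 hb with rfl | hb
        · omega
        · exact ho l' hl'.2 hl'.1 a ha c hc b hb hab hbc
    · have hml := outer_lt hS hmo hl0 hkey
      have hmo' := mem_outer.1 hmo
      refine ⟨Or.inr ⟨by rintro rfl; omega, hmo'.1⟩, ?_⟩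
      intro l' hl' hne a ha c hc b hb hab hbc
      rcases mem_insert.1 hl' with rfl | hl'
      · have := hlt m hmo'.1 b hb
        rcases mem_ins.1 ha with rfl | ha
        · omega
        · have := hml b hb a ha
          omega
      · exact hmo'.2 l' (mem_of_mem_erase hl') hne a ha c hc b hb hab hbc

lemma N_child {k : ℕ} {S : Finset (List ℕ)} (hS : Good k S) {l : List ℕ} (hl : l ∈ outer S)
    {i : ℕ} : N (child k S l i) =
      (∑ l' ∈ (outer S).filter (fun l' => key l' < key l), wt l') + wt (ins k l i) := by
  unfold N
  rw [outer_child hS hl, sum_insert, add_comm]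
  intro h
  exact hS.not_mem (mem_outer.1 (mem_filter.1 h).1).1 (mem_ins.2 (Or.inl rfl))

lemma sum_order (O : Finset (List ℕ)) (w : List ℕ → ℕ) (g : ℕ → ℤ)
    (hinj : ∀ l ∈ O, ∀ l' ∈ O, key l = key l' → l = l') :
    ∑ l ∈ O, ∑ t ∈ Icc 2 (w l + 1), g ((∑ l' ∈ O.filter (fun l' => key l' < key l), w l') + t) =
      ∑ t ∈ Icc 2 ((∑ l ∈ O, w l) + 1), g t := by
  classical
  induction O using Finset.induction_on_max_value key with
  | empty => simp
  | insert a s ha hmax ih =>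
    rw [sum_insert ha, sum_insert ha]
    have hlt : ∀ x ∈ s, key x < key a := by
      intro x hx
      refine lt_of_le_of_ne (hmax x hx) fun h => ?_
      have := hinj x (mem_insert_of_mem hx) a (mem_insert_self _ _) h
      exact ha (this ▸ hx)
    have e1 : (insert a s).filter (fun l' => key l' < key a) = s := by
      rw [filter_insert, if_neg (lt_irrefl _), filter_true_of_mem hlt]
    have e2 : ∀ l ∈ s, (insert a s).filter (fun l' => key l' < key l) =
        s.filter (fun l' => key l' < key l) := by
      intro l hl
      rw [filter_insert, if_neg (not_lt.2 (hlt l hl).le)]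
    have e3 : ∑ l ∈ s, ∑ t ∈ Icc 2 (w l + 1),
        g ((∑ l' ∈ (insert a s).filter (fun l' => key l' < key l), w l') + t) =
        ∑ l ∈ s, ∑ t ∈ Icc 2 (w l + 1),
          g ((∑ l' ∈ s.filter (fun l' => key l' < key l), w l') + t) :=
      sum_congr rfl (fun l hl => by rw [e2 l hl])
    rw [e1, e3, ih
      (fun l hl l' hl' => hinj l (mem_insert_of_mem hl) l' (mem_insert_of_mem hl'))]
    generalize ∑ l ∈ s, w l = W
    generalize w a = v
    induction v with
    | zero => simp
    | succ v ihv =>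
      by_cases hv : v = 0 ∧ W = 0
      · obtain ⟨rfl, rfl⟩ := hv
        simp
      · rw [show v + 1 + W + 1 = (v + W + 1) + 1 by ring,
          sum_Icc_succ_top (show 2 ≤ v + 1 + 1 by omega),
          sum_Icc_succ_top (show 2 ≤ v + W + 1 + 1 by omega), ← ihv,
          show W + (v + 1 + 1) = v + W + 1 + 1 by ring]
        ring

lemma sum_children {k : ℕ} {S : Finset (List ℕ)} (hS : Good k S) (g : ℕ → ℤ) :
    g (N (insert [k] S)) + ∑ l ∈ outer S, ∑ i ∈ sites l, g (N (child k S l i)) = L g (N S) := by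
  have : ∀ l ∈ outer S, ∑ i ∈ sites l, g (N (child k S l i)) = ∑ t ∈ Icc 2 (wt l + 1),
      g ((∑ l' ∈ (outer S).filter (fun l' => key l' < key l), wt l') + t) := by
    intro l hl
    rw [← sum_sites k l (hS.lt l (mem_outer.1 hl).1)
      (fun t => g ((∑ l' ∈ (outer S).filter (fun l' => key l' < key l), wt l') + t))]
    exact sum_congr rfl fun i _ => by rw [N_child hS hl]
  rw [sum_congr rfl this, sum_order (outer S) wt g (fun l hl l' hl' h => key_inj hS hl hl' h),
    N_push hS]
  unfold L
  rw [show N S + 2 = (N S + 1) + 1 by ring, sum_Icc_succ_top (show 2 ≤ N S + 1 + 1 by omega),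
    add_comm]
  rfl

/-! ### Enumeration -/

/-- All children. -/
noncomputable def kids (k : ℕ) (S : Finset (List ℕ)) : Finset (Finset (List ℕ)) :=
  insert (insert [k] S) (((outer S).sigma sites).image (fun q => child k S q.1 q.2))

/-- All structures. -/
noncomputable def G : ℕ → Finset (Finset (List ℕ))
  | 0 => {∅}
  | k + 1 => (G k).biUnion (kids k)

lemma mem_kids {k : ℕ} {S S' : Finset (List ℕ)} : S' ∈ kids k S ↔
    S' = insert [k] S ∨ ∃ l ∈ outer S, ∃ i ∈ sites l, S' = child k S l i := by
  simp only [kids, mem_insert, mem_image, mem_sigma, Sigma.exists]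
  constructor
  · rintro (h | ⟨l, i, ⟨h1, h2⟩, rfl⟩)
    · exact Or.inl h
    · exact Or.inr ⟨l, h1, i, h2, rfl⟩
  · rintro (h | ⟨l, h1, i, h2, rfl⟩)
    · exact Or.inl h
    · exact Or.inr ⟨l, i, ⟨h1, h2⟩, rfl⟩

lemma par_kids {k : ℕ} {S S' : Finset (List ℕ)} (hS : Good k S) (h : S' ∈ kids k S) :
    par k S' = S := by
  rcases mem_kids.1 h with rfl | ⟨l, hl, i, hi, rfl⟩
  · exact par_push hS
  · exact par_child hS (mem_outer.1 hl).1

lemma mem_G (k : ℕ) : ∀ S, S ∈ G k ↔ Good k S := by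
  induction k with
  | zero =>
    intro S
    simp only [G, mem_singleton]
    constructor
    · rintro rfl
      constructor <;> simp
    · intro h
      rw [eq_empty_iff_forall_notMem]
      intro l hl
      obtain ⟨x, hx⟩ := List.exists_mem_of_ne_nil _ (h.ne l hl)
      have := h.lt l hl x hx
      omega
  | succ k ih =>
    intro S
    simp only [G, mem_biUnion]
    constructor
    · rintro ⟨T, hT, h⟩
      rw [ih] at hT
      rcases mem_kids.1 h with rfl | ⟨l, hl, i, hi, rfl⟩
      · exact good_push hT
      · exact good_child hT hl hi
    · intro h
      exact ⟨par k S, (ih _).2 (good_par h), mem_kids.2 (exists_par h)⟩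

lemma sum_kids {k : ℕ} {S : Finset (List ℕ)} (hS : Good k S) (g : ℕ → ℤ) :
    ∑ S' ∈ kids k S, g (N S') = L g (N S) := by
  rw [← sum_children hS g, kids, sum_insert, sum_image, sum_sigma]
  · rintro ⟨l, i⟩ h ⟨l', i'⟩ h' he
    simp only [coe_sigma, Set.mem_sigma_iff, mem_coe] at h h'
    simp only at he
    have hl := hS.not_mem (mem_outer.1 h.1).1
    have hl' := hS.not_mem (mem_outer.1 h'.1).1
    have hc : ins k l i ∈ child k S l' i' := by
      rw [← he]; exact mem_insert_self _ _
    have hcc : ins k l i = ins k l' i' := by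
      rcases mem_insert.1 hc with h | h
      · exact h
      · exact absurd (mem_ins.2 (Or.inl rfl)) (hS.not_mem (mem_of_mem_erase h))
    have hll : l = l' := by rw [← erase_ins (i := i) hl, ← erase_ins (i := i') hl', hcc]
    subst hll
    have : i = i' := ins_inj hl (mem_sites.1 h.2).1 (mem_sites.1 h'.2).1 hcc
    subst this
    rfl
  · simp only [mem_image, mem_sigma, Sigma.exists, not_exists, not_and]
    rintro l i ⟨hl, hi⟩ he
    have hl := (mem_outer.1 hl).1
    have hc : [k] ∈ child k S l i := by
      rw [he]; exact mem_insert_self _ _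
    rcases mem_insert.1 hc with h | h
    · have h1 := congrArg List.length h
      rw [length_ins] at h1
      simp at h1
      exact hS.ne l hl h1
    · exact hS.not_mem (mem_of_mem_erase h) (by simp)

lemma sum_G (k : ℕ) : ∀ g : ℕ → ℤ, ∑ S ∈ G k, g (N S) = (L^[k] g) 0 := by
  induction k with
  | zero => intro g; simp [G, N, outer]
  | succ k ih =>
    intro g
    rw [Function.iterate_succ_apply, ← ih, G, sum_biUnion]
    · exact sum_congr rfl fun S hS => sum_kids ((mem_G k S).1 hS) g
    · intro S hS T hT hne
      rw [Function.onFun, disjoint_left]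
      intro U h1 h2
      exact hne ((par_kids ((mem_G k S).1 hS) h1).symm.trans (par_kids ((mem_G k T).1 hT) h2))

lemma iter_L (k : ℕ) : L^[k] (fun _ => 1) = B k := by
  induction k with
  | zero => rfl
  | succ k ih => rw [Function.iterate_succ_apply', ih, L_B]

lemma card_G (k : ℕ) : (G k).card = (3 * k).choose k / (2 * k + 1) := by
  have h := sum_G k (fun _ => 1)
  rw [iter_L, B_final] at h
  simp only [sum_const, nsmul_eq_mul, mul_one] at h
  exact_mod_cast h

/-! ### Transfer from `Fin k` -/

/-- Forgetting bounds. -/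
def emb (k : ℕ) (S : Finset (List (Fin k))) : Finset (List ℕ) := S.image (List.map Fin.val)

lemma map_inj (k : ℕ) : Function.Injective (List.map (Fin.val : Fin k → ℕ)) :=
  List.map_injective_iff.2 Fin.val_injective

lemma avoids_map {k : ℕ} (l : List (Fin k)) : Avoids321 (l.map Fin.val) ↔ Avoids321 l := by
  unfold Avoids321
  rw [not_iff_not]
  constructor
  · rintro ⟨a, b, c, hs, h1, h2⟩
    obtain ⟨m, hm, he⟩ := List.sublist_map_iff.1 hs
    match m, he with
    | [x, y, z], he =>
      simp only [List.map_cons, List.map_nil, List.cons.injEq, and_true] at he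
      obtain ⟨rfl, rfl, rfl⟩ := he
      exact ⟨x, y, z, hm, h1, h2⟩
  · rintro ⟨a, b, c, hs, h1, h2⟩
    exact ⟨a, b, c, hs.map Fin.val, h1, h2⟩

lemma good_emb (k : ℕ) (S : Finset (List (Fin k))) : Good k (emb k S) ↔
    ((∀ l ∈ S, l ≠ [] ∧ l.Nodup ∧ Avoids321 l) ∧
      (∀ x : Fin k, ∃! l, l ∈ S ∧ x ∈ l) ∧
      ¬ ∃ a b c d : Fin k, a < b ∧ b < c ∧ c < d ∧
        ∃ l₁ ∈ S, ∃ l₂ ∈ S, l₁ ≠ l₂ ∧ a ∈ l₁ ∧ c ∈ l₁ ∧ b ∈ l₂ ∧ d ∈ l₂) := by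
  have hm : ∀ l ∈ S, l.map Fin.val ∈ emb k S := fun l hl => mem_image_of_mem _ hl
  have hv : ∀ (x : Fin k) (l : List (Fin k)), (x : ℕ) ∈ l.map Fin.val ↔ x ∈ l := fun x l =>
    List.mem_map_of_injective Fin.val_injective
  constructor
  · intro h
    refine ⟨?_, ?_, ?_⟩
    · intro l hl
      refine ⟨?_, ?_, ?_⟩
      · rintro rfl
        exact h.ne _ (hm _ hl) rfl
      · exact (h.nd _ (hm l hl)).of_map _
      · exact (avoids_map l).1 (h.av _ (hm l hl))
    · intro x
      obtain ⟨l', hl', hx⟩ := h.cov x x.2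
      obtain ⟨l, hl, rfl⟩ := mem_image.1 hl'
      refine ⟨l, ⟨hl, (hv x l).1 hx⟩, ?_⟩
      rintro m ⟨hmS, hxm⟩
      exact map_inj k (h.dis _ (hm m hmS) _ (hm l hl) x ((hv x m).2 hxm) hx)
    · rintro ⟨a, b, c, d, hab, hbc, hcd, l₁, h₁, l₂, h₂, hne, ha, hc, hb, hd⟩
      exact hne (map_inj k (h.nc a b c d hab hbc hcd _ (hm _ h₁) _ (hm _ h₂) ((hv _ _).2 ha)
        ((hv _ _).2 hc) ((hv _ _).2 hb) ((hv _ _).2 hd)))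
  · rintro ⟨h1, h2, h3⟩
    constructor
    · intro l' hl'
      obtain ⟨l, hl, rfl⟩ := mem_image.1 hl'
      simpa using (h1 l hl).1
    · intro l' hl'
      obtain ⟨l, hl, rfl⟩ := mem_image.1 hl'
      exact (h1 l hl).2.1.map Fin.val_injective
    · intro l' hl'
      obtain ⟨l, hl, rfl⟩ := mem_image.1 hl'
      exact (avoids_map l).2 (h1 l hl).2.2
    · intro l' hl' x hx
      obtain ⟨l, hl, rfl⟩ := mem_image.1 hl'
      obtain ⟨y, hy, rfl⟩ := List.mem_map.1 hx
      exact y.2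
    · intro x hx
      obtain ⟨l, ⟨hl, hxl⟩, -⟩ := h2 ⟨x, hx⟩
      exact ⟨_, hm l hl, (hv ⟨x, hx⟩ l).2 hxl⟩
    · intro l' hl' m' hm' x hx hx'
      obtain ⟨l, hl, rfl⟩ := mem_image.1 hl'
      obtain ⟨m, hmS, rfl⟩ := mem_image.1 hm'
      obtain ⟨y, hy, rfl⟩ := List.mem_map.1 hx
      rw [hv] at hx'
      rw [(h2 y).unique ⟨hl, hy⟩ ⟨hmS, hx'⟩]
    · intro a b c d hab hbc hcd l' hl' m' hm' ha hc hb hd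
      obtain ⟨l, hl, rfl⟩ := mem_image.1 hl'
      obtain ⟨m, hmS, rfl⟩ := mem_image.1 hm'
      obtain ⟨a, ha1, rfl⟩ := List.mem_map.1 ha
      obtain ⟨b, hb1, rfl⟩ := List.mem_map.1 hb
      obtain ⟨c, hc1, rfl⟩ := List.mem_map.1 hc
      obtain ⟨d, hd1, rfl⟩ := List.mem_map.1 hd
      by_contra hne
      exact h3 ⟨a, b, c, d, hab, hbc, hcd, l, hl, m, hmS, fun h => hne (by rw [h]),
        ha1, hc1, hb1, hd1⟩

lemma emb_inj (k : ℕ) : Function.Injective (emb k) := Finset.image_injective (map_inj k)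

lemma emb_surj (k : ℕ) (S : Finset (List ℕ)) (h : Good k S) : ∃ T, emb k T = S := by
  have : (S : Set (List ℕ)) ⊆ (List.map (Fin.val : Fin k → ℕ)) '' Set.univ := by
    intro l hl
    rw [Set.image_univ, Set.range_list_map]
    intro x hx
    exact ⟨⟨x, h.lt l hl x hx⟩, rfl⟩
  obtain ⟨T, -, hT⟩ := Finset.subset_set_image_iff.1 this
  exact ⟨T, hT⟩

end NC321



/-- Partitions of `[k]` into a set of noncrossing lists each of which avoids 321
(equivalently, pairs of a noncrossing set partition of `[k]` and a 321-avoiding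
ordering of each block) are counted by `(1/(2k+1)) C(3k,k)`. -/
theorem card_nc_321_avoiding_lists (k : ℕ) :
    Nat.card {S : Finset (List (Fin k)) // (∀ l ∈ S, l ≠ [] ∧ l.Nodup ∧ Avoids321 l) ∧
      (∀ x : Fin k, ∃! l, l ∈ S ∧ x ∈ l) ∧
      ¬ ∃ a b c d : Fin k, a < b ∧ b < c ∧ c < d ∧
        ∃ l₁ ∈ S, ∃ l₂ ∈ S, l₁ ≠ l₂ ∧ a ∈ l₁ ∧ c ∈ l₁ ∧ b ∈ l₂ ∧ d ∈ l₂} =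
    (3 * k).choose k / (2 * k + 1) := by
  rw [← NC321.card_G k, ← Nat.card_eq_finsetCard]
  refine Nat.card_congr (Equiv.ofBijective
    (fun S => ⟨NC321.emb k S.1, (NC321.mem_G k _).2 ((NC321.good_emb k S.1).2 S.2)⟩) ⟨?_, ?_⟩)
  · intro S T h
    exact Subtype.ext (NC321.emb_inj k (congrArg Subtype.val h))
  · rintro ⟨S, hS⟩
    have hg := (NC321.mem_G k S).1 hS
    obtain ⟨T, rfl⟩ := NC321.emb_surj k S hg
    exact ⟨⟨T, (NC321.good_emb k T).1 hg⟩, rfl⟩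
end
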